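/- arXiv:1411.1303 — 9 statements merged into one kernel-verified Lean document; each statement's English description precedes it below -/
import Mathlib

section
/- Let λ : ℕ → ℕ be defined by λ_0 = 1 and λ_{k+1} = λ_k^2 + 1. Then for every k ≥ 0, λ_k ≤ 1.5180^(2^k), where the inequality is between real numbers; equivalently, (λ_k)^(1/2^k) ≤ 1.5180. -/
/-!
Adding one to the sequence turns the almost-squaring `x ↦ x ^ 2 + 1` into a map dominated by
squaring: `(x ^ 2 + 1) + 1 ≤ (x + 1) ^ 2` as soon as `1 ≤ x`. Hence a bound
`a n + 1 ≤ c ^ 2 ^ n` at a single index `n` propagates upwards, while taking square roots in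
`a k ^ 2 ≤ a (k + 1)` carries `a n ≤ c ^ 2 ^ n` downwards. For `λ` and `c = 1.518` the index `n = 3`
suffices, since `λ 3 + 1 = 27 ≤ 1.518 ^ 8`; smaller indices do not (`λ 2 + 1 = 6 > 1.518 ^ 4`).
-/

section OrderedSemiring

variable {R : Type*} [Semiring R] [PartialOrder R] [IsOrderedRing R]

lemma sq_add_one_add_one_le_add_one_sq {x : R} (hx : 1 ≤ x) : x ^ 2 + 1 + 1 ≤ (x + 1) ^ 2 :=
  calc x ^ 2 + 1 + 1 ≤ x ^ 2 + 2 * x + 1 := by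
        gcongr
        exact one_le_mul_of_one_le_of_one_le one_le_two hx
    _ = (x + 1) ^ 2 := by rw [(Commute.one_right x).add_sq, mul_one, one_pow]

variable {a : ℕ → R} {c : R} {k n : ℕ}

lemma one_le_of_sq_le_succ (hlower : ∀ k, a k ^ 2 ≤ a (k + 1)) (hn : 1 ≤ a n) (hnk : n ≤ k) :
    1 ≤ a k := by
  induction k, hnk using Nat.le_induction with
  | base => exact hn
  | succ k _ ih => exact (one_le_pow₀ ih).trans (hlower k)

lemma add_one_le_pow_two_pow_of_index_le (hlower : ∀ k, a k ^ 2 ≤ a (k + 1))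
    (hupper : ∀ k, a (k + 1) ≤ a k ^ 2 + 1) (hn : 1 ≤ a n) (hc : a n + 1 ≤ c ^ 2 ^ n)
    (hnk : n ≤ k) : a k + 1 ≤ c ^ 2 ^ k := by
  induction k, hnk using Nat.le_induction with
  | base => exact hc
  | succ k hnk ih =>
    have hk : 1 ≤ a k := one_le_of_sq_le_succ hlower hn hnk
    have hk0 : 0 ≤ a k + 1 := add_nonneg (zero_le_one.trans hk) zero_le_one
    calc a (k + 1) + 1 ≤ a k ^ 2 + 1 + 1 := by gcongr; exact hupper k
      _ ≤ (a k + 1) ^ 2 := sq_add_one_add_one_le_add_one_sq hk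
      _ ≤ (c ^ 2 ^ k) ^ 2 := pow_le_pow_left₀ hk0 ih 2
      _ = c ^ 2 ^ (k + 1) := by rw [← pow_mul, ← pow_succ]

end OrderedSemiring

section LinearOrderedSemiring

variable {R : Type*} [Semiring R] [LinearOrder R] [IsStrictOrderedRing R]
  {a : ℕ → R} {c : R} {k n : ℕ}

lemma le_pow_two_pow_of_le_index (hlower : ∀ k, a k ^ 2 ≤ a (k + 1)) (hc0 : 0 ≤ c)
    (hc : a n ≤ c ^ 2 ^ n) (hkn : k ≤ n) : a k ≤ c ^ 2 ^ k := by
  induction hkn using Nat.decreasingInduction with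
  | self => exact hc
  | of_succ k _ ih =>
    refine le_of_pow_le_pow_left₀ two_ne_zero (pow_nonneg hc0 _) ?_
    calc a k ^ 2 ≤ a (k + 1) := hlower k
      _ ≤ c ^ 2 ^ (k + 1) := ih
      _ = (c ^ 2 ^ k) ^ 2 := by rw [← pow_mul, ← pow_succ]

theorem le_pow_two_pow_of_add_one_le (hlower : ∀ k, a k ^ 2 ≤ a (k + 1))
    (hupper : ∀ k, a (k + 1) ≤ a k ^ 2 + 1) (hn : 1 ≤ a n) (hc0 : 0 ≤ c)
    (hc : a n + 1 ≤ c ^ 2 ^ n) (k : ℕ) : a k ≤ c ^ 2 ^ k := by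
  rcases le_total n k with hnk | hkn
  · exact (lt_add_one _).le.trans (add_one_le_pow_two_pow_of_index_le hlower hupper hn hc hnk)
  · exact le_pow_two_pow_of_le_index hlower hc0 ((lt_add_one _).le.trans hc) hkn

end LinearOrderedSemiring

theorem lambda_rough_bound
    (l : ℕ → ℕ) (h0 : l 0 = 1) (hrec : ∀ k, l (k + 1) = (l k) ^ 2 + 1) :
    ∀ k : ℕ, (l k : ℝ) ≤ 1.5180 ^ (2 ^ k) := by
  have hcast (k : ℕ) : (l (k + 1) : ℝ) = (l k : ℝ) ^ 2 + 1 := mod_cast hrec k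
  have h3 : l 3 = 26 := by simp [hrec, h0]
  apply le_pow_two_pow_of_add_one_le (a := fun k ↦ (l k : ℝ)) (n := 3)
  case hlower => exact fun k ↦ (lt_add_one _).le.trans_eq (hcast k).symm
  case hupper => exact fun k ↦ (hcast k).le
  case hn => norm_num [h3]
  case hc0 => norm_num
  case hc => norm_num [h3]
end

section
/- Let λ : ℕ → ℕ be defined by λ_0 = 1 and λ_{k+1} = λ_k^2 + 1. Then for every k ≥ 0, λ_k ≤ 1.50284^(2^k), where the inequality is between real numbers. -/
/-!
Since `l k ^ 2 ≤ l (k + 1)` and `l (k + 1) + 1 ≤ (l k + 1) ^ 2`, the roots `l k ^ (1 / 2 ^ k)`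
increase while the roots `(l k + 1) ^ (1 / 2 ^ k)` decrease. Hence every term of the first sequence
is at most every term of the second, and any bound on a single `(l m + 1) ^ (1 / 2 ^ m)` bounds
`l k ^ (1 / 2 ^ k)` for all `k` at once, both below and above `m`.
-/

section MonoidWithZero

variable {M₀ : Type*} [MonoidWithZero M₀] [Preorder M₀] [PosMulMono M₀] [MulPosMono M₀]
  {u : ℕ → M₀}

theorem pow_two_pow_le_of_sq_le_succ [ZeroLEOneClass M₀] (hu : ∀ k, 0 ≤ u k)
    (hsq : ∀ k, u k ^ 2 ≤ u (k + 1)) (m n : ℕ) : u m ^ 2 ^ n ≤ u (m + n) := by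
  induction n with
  | zero => simp
  | succ n ih =>
    calc u m ^ 2 ^ (n + 1) = (u m ^ 2 ^ n) ^ 2 := by rw [pow_succ 2, pow_mul]
      _ ≤ u (m + n) ^ 2 := pow_le_pow_left₀ (pow_nonneg (hu m) _) ih 2
      _ ≤ u (m + (n + 1)) := hsq (m + n)

theorem le_pow_two_pow_of_succ_le_sq (hu : ∀ k, 0 ≤ u k) (hsq : ∀ k, u (k + 1) ≤ u k ^ 2)
    (m n : ℕ) : u (m + n) ≤ u m ^ 2 ^ n := by
  induction n with
  | zero => simp
  | succ n ih =>
    calc u (m + (n + 1)) ≤ u (m + n) ^ 2 := hsq (m + n)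
      _ ≤ (u m ^ 2 ^ n) ^ 2 := pow_le_pow_left₀ (hu _) ih 2
      _ = u m ^ 2 ^ (n + 1) := by rw [pow_succ 2, pow_mul]

end MonoidWithZero

section OrderedSemiring

variable {R : Type*} [CommSemiring R] [LinearOrder R] [IsStrictOrderedRing R] {u : ℕ → R} {c : R}

theorem le_pow_two_pow_of_le (hc : 0 ≤ c) (hu : ∀ k, 0 ≤ u k) (hsq : ∀ k, u k ^ 2 ≤ u (k + 1))
    {k m : ℕ} (hkm : k ≤ m) (hm : u m ≤ c ^ 2 ^ m) : u k ≤ c ^ 2 ^ k := by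
  obtain ⟨n, rfl⟩ := Nat.exists_eq_add_of_le hkm
  refine le_of_pow_le_pow_left₀ (n := 2 ^ n) (by positivity) (pow_nonneg hc _) ?_
  calc u k ^ 2 ^ n ≤ u (k + n) := pow_two_pow_le_of_sq_le_succ hu hsq k n
    _ ≤ c ^ 2 ^ (k + n) := hm
    _ = (c ^ 2 ^ k) ^ 2 ^ n := by rw [pow_add, pow_mul]

theorem add_one_le_pow_two_pow_of_le (hu : ∀ k, 0 ≤ u k)
    (hsucc : ∀ k, u (k + 1) ≤ u k ^ 2 + 2 * u k) {k m : ℕ} (hmk : m ≤ k)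
    (hm : u m + 1 ≤ c ^ 2 ^ m) : u k + 1 ≤ c ^ 2 ^ k := by
  obtain ⟨n, rfl⟩ := Nat.exists_eq_add_of_le hmk
  have hnonneg : ∀ i, 0 ≤ u i + 1 := fun i ↦ add_nonneg (hu i) zero_le_one
  have hsq : ∀ i, u (i + 1) + 1 ≤ (u i + 1) ^ 2 := fun i ↦
    calc u (i + 1) + 1 ≤ u i ^ 2 + 2 * u i + 1 := by gcongr; exact hsucc i
      _ = (u i + 1) ^ 2 := by ring
  calc u (m + n) + 1 ≤ (u m + 1) ^ 2 ^ n :=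
        le_pow_two_pow_of_succ_le_sq (u := fun i ↦ u i + 1) hnonneg hsq m n
    _ ≤ (c ^ 2 ^ m) ^ 2 ^ n := pow_le_pow_left₀ (hnonneg m) hm _
    _ = c ^ 2 ^ (m + n) := by rw [pow_add, pow_mul]

theorem le_pow_two_pow_of_add_one_le_s5 (hc : 0 ≤ c) (hu : ∀ k, 0 ≤ u k)
    (hsq : ∀ k, u k ^ 2 ≤ u (k + 1)) (hsucc : ∀ k, u (k + 1) ≤ u k ^ 2 + 2 * u k) {m : ℕ}
    (hm : u m + 1 ≤ c ^ 2 ^ m) (k : ℕ) : u k ≤ c ^ 2 ^ k := by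
  have le_of_add_one_le {a b : R} (h : a + 1 ≤ b) : a ≤ b :=
    (le_add_of_nonneg_right zero_le_one).trans h
  rcases le_total k m with hkm | hmk
  · exact le_pow_two_pow_of_le hc hu hsq hkm (le_of_add_one_le hm)
  · exact le_of_add_one_le (add_one_le_pow_two_pow_of_le hu hsucc hmk hm)

end OrderedSemiring

theorem lambda_sharp_upper_bound
    (l : ℕ → ℕ) (h0 : l 0 = 1) (hrec : ∀ k, l (k + 1) = (l k) ^ 2 + 1) :
    ∀ k : ℕ, (l k : ℝ) ≤ 1.50284 ^ (2 ^ k) := by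
  have one_le (k : ℕ) : 1 ≤ l k := by cases k <;> simp [h0, hrec]
  have sq_le (k : ℕ) : l k ^ 2 ≤ l (k + 1) := by simp [hrec]
  have succ_le (k : ℕ) : l (k + 1) ≤ l k ^ 2 + 2 * l k := by linarith [hrec k, one_le k]
  have l_five : l 5 = 458330 := by simp [hrec, h0]
  -- `5` is the least `m` with `l m + 1 ≤ 1.50284 ^ 2 ^ m`.
  have bound_five : (l 5 : ℝ) + 1 ≤ 1.50284 ^ 2 ^ 5 := by rw [l_five]; norm_num
  exact le_pow_two_pow_of_add_one_le_s5 (u := fun k ↦ (l k : ℝ)) (by norm_num)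
    (fun k ↦ Nat.cast_nonneg (l k)) (fun k ↦ mod_cast sq_le k) (fun k ↦ mod_cast succ_le k)
    bound_five
end

section
/- Let λ : ℕ → ℕ be defined by λ_0 = 1 and λ_{k+1} = λ_k^2 + 1. Then for every k ≥ 4, λ_k ≥ 1.5028^(2^k), where the inequality is between real numbers. -/
theorem pow_two_pow_le_of_sq_le {M₀ : Type*} [MonoidWithZero M₀] [Preorder M₀] [ZeroLEOneClass M₀]
    [PosMulMono M₀] [MulPosMono M₀] {a : ℕ → M₀} {c : M₀} {m : ℕ} (hc : 0 ≤ c)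
    (hsq : ∀ k, m ≤ k → a k ^ 2 ≤ a (k + 1)) (hm : c ^ 2 ^ m ≤ a m) {k : ℕ} (hk : m ≤ k) :
    c ^ 2 ^ k ≤ a k := by
  induction k, hk using Nat.le_induction with
  | base => exact hm
  | succ k hk ih =>
    calc
      c ^ 2 ^ (k + 1) = (c ^ 2 ^ k) ^ 2 := by rw [pow_succ 2 k, pow_mul]
      _ ≤ a k ^ 2 := pow_le_pow_left₀ (pow_nonneg hc _) ih 2
      _ ≤ a (k + 1) := hsq k hk

theorem lambda_lower_bound_15028
    (l : ℕ → ℕ) (h0 : l 0 = 1) (hrec : ∀ k, l (k + 1) = (l k) ^ 2 + 1) :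
    ∀ k, 4 ≤ k → (1.5028 : ℝ) ^ (2 ^ k) ≤ (l k : ℝ) := by
  have l_four : l 4 = 677 := by norm_num [hrec, h0]
  have sq_le (k : ℕ) : (l k : ℝ) ^ 2 ≤ l (k + 1) := by
    exact_mod_cast (Nat.le_succ (l k ^ 2)).trans_eq (hrec k).symm
  -- `677 ^ (1 / 16) ≈ 1.50284`, whereas `l 3 = 26` and `26 ^ (1 / 8) ≈ 1.50270` is too small.
  have base : (1.5028 : ℝ) ^ 2 ^ 4 ≤ l 4 := by
    rw [l_four]
    norm_num
  exact fun k hk ↦ pow_two_pow_le_of_sq_le (by norm_num) (fun k _ ↦ sq_le k) base hk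
end

section
/- Let P : ℕ → ℕ satisfy P(2) = 1 and, for n ≥ 3, P(n) = max{ P(n₁)·P(n₂) + 1 : n₁ + n₂ = n + 1, n₁, n₂ ≥ 2 }. Then for every n ≥ 2, P(n) ≤ 1.50284^(n-1), where the inequality is between real numbers. -/
/-!
With `a k = P (k + 1)` the recursion reads `a k = max (a i * a j) + 1` over `i + j = k`, `i, j ≥ 1`.
The bound `a k ≤ x ^ k` does not reproduce itself because of the `+ 1`, but `a k ≤ x ^ k - δ` does:
`(x ^ i - δ) * (x ^ j - δ) + 1 ≤ x ^ (i + j) - δ` as soon as `1 + δ + δ ^ 2 ≤ δ * (x ^ i + x ^ j)`,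
and by AM-GM `x ^ i + x ^ j` is large whenever `i + j` is. It remains to compare the first values.
For `x = 1.50284` the tightest comparisons are `a 8 = 26` and `a 16 = 677`, which lie on the orbit
`1, 2, 5, 26, 677, …` of `t ↦ t ^ 2 + 1`, where `a k ^ (1 / k)` tends to `1.502836…`: the gaps
`x ^ k - a k` are `0.0196…` and `0.0237…`. So `δ = 0.019` is admissible for `k ≤ 16`, and with this
`δ` the induction step works from `k = 17` on.
-/

section OrderedSemiring

variable {R : Type*} [Semiring R] [PartialOrder R]

/-- Nonnegative subsolutions of the recursion for convex path counts, with the index shifted: `a k`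
stands for `P (k + 1)`, so that `n₁ + n₂ = n + 1` with `n₁, n₂ ≥ 2` becomes `i + j = k` with
`i, j ≥ 1`. The value `a 0` is unconstrained. -/
structure IsSplitSubsolution (a : ℕ → R) : Prop where
  nonneg : ∀ k, 1 ≤ k → 0 ≤ a k
  apply_one_le : a 1 ≤ 1
  exists_split : ∀ k, 2 ≤ k → ∃ i j, 1 ≤ i ∧ 1 ≤ j ∧ i + j = k ∧ a k ≤ a i * a j + 1

theorem isSplitSubsolution_shift {P : ℕ → R} (hP0 : ∀ n, 2 ≤ n → 0 ≤ P n) (hP2 : P 2 ≤ 1)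
    (hP : ∀ n, 3 ≤ n → ∃ m ∈ Finset.Icc 2 (n - 1), P n ≤ P m * P (n + 1 - m) + 1) :
    IsSplitSubsolution fun k ↦ P (k + 1) where
  nonneg k hk := hP0 (k + 1) (by omega)
  apply_one_le := hP2
  exists_split k hk := by
    obtain ⟨m, hm, hle⟩ := hP (k + 1) (by omega)
    rw [Finset.mem_Icc] at hm
    refine ⟨m - 1, k + 1 - m, by omega, by omega, by omega, ?_⟩
    rwa [show m - 1 + 1 = m by omega, show k + 1 - m + 1 = k + 1 + 1 - m by omega]

variable [IsOrderedRing R]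

theorem IsSplitSubsolution.le_of_mul_add_one_le {a u : ℕ → R} (ha : IsSplitSubsolution a)
    {N M : ℕ} (hN : 1 ≤ N) (hinit : ∀ k, 1 ≤ k → k ≤ N → a k ≤ u k)
    (hu : ∀ i j, 1 ≤ i → 1 ≤ j → N < i + j → i + j ≤ M → u i * u j + 1 ≤ u (i + j)) :
    ∀ k, 1 ≤ k → k ≤ M → a k ≤ u k := by
  intro k
  induction k using Nat.strong_induction_on with
  | _ k ih =>
    intro hk hkM
    rcases le_or_gt k N with hkN | hkN
    · exact hinit k hk hkN
    obtain ⟨i, j, hi, hj, rfl, hsplit⟩ := ha.exists_split k (by omega)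
    have hai : a i ≤ u i := ih i (by omega) hi (by omega)
    have haj : a j ≤ u j := ih j (by omega) hj (by omega)
    calc a (i + j) ≤ a i * a j + 1 := hsplit
      _ ≤ u i * u j + 1 := by
        gcongr
        exacts [ha.nonneg j hj, (ha.nonneg i hi).trans hai]
      _ ≤ u (i + j) := hu i j hi hj hkN hkM

/-- The values `P 2, …, P 17` of the recursion with equality, in the shifted indexing: entry `k` is
`P (k + 1)` for `1 ≤ k ≤ 16`. All other entries are the junk value `0`. -/
def initialPathCount (k : ℕ) : ℕ :=
  [0, 1, 2, 3, 5, 7, 11, 16, 26, 36, 56, 81, 131, 183, 287, 417, 677].getD k 0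

theorem initialPathCount_mul_add_one_le {i j : ℕ} (hi : 1 ≤ i) (hj : 1 ≤ j) (hij : i + j ≤ 16) :
    initialPathCount i * initialPathCount j + 1 ≤ initialPathCount (i + j) := by
  have table : ∀ i < 16, ∀ j < 16, 1 ≤ i → 1 ≤ j → i + j ≤ 16 →
      initialPathCount i * initialPathCount j + 1 ≤ initialPathCount (i + j) := by
    decide
  exact table i (by omega) j (by omega) hi hj hij

theorem IsSplitSubsolution.le_initialPathCount {a : ℕ → R} (ha : IsSplitSubsolution a)
    {k : ℕ} (hk : 1 ≤ k) (hk16 : k ≤ 16) : a k ≤ initialPathCount k := by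
  refine ha.le_of_mul_add_one_le (u := fun k ↦ (initialPathCount k : R)) le_rfl ?_ ?_ k hk hk16
  · intro l hl hl1
    obtain rfl : l = 1 := le_antisymm hl1 hl
    simpa [initialPathCount] using ha.apply_one_le
  · intro i j hi hj _ hij
    exact_mod_cast Nat.mono_cast (α := R) (initialPathCount_mul_add_one_le hi hj hij)

end OrderedSemiring

section LinearOrderedCommRing

variable {R : Type*} [CommRing R] [LinearOrder R] [IsStrictOrderedRing R]

theorem sub_mul_sub_add_one_le_mul_sub {y z δ : R} (hy : 0 ≤ y) (hz : 0 ≤ z) (hδ : 0 ≤ δ)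
    (h : (1 + δ + δ ^ 2) ^ 2 ≤ 4 * δ ^ 2 * (y * z)) :
    (y - δ) * (z - δ) + 1 ≤ y * z - δ := by
  have am_gm : (1 + δ + δ ^ 2) ^ 2 ≤ (δ * (y + z)) ^ 2 :=
    calc (1 + δ + δ ^ 2) ^ 2 ≤ δ ^ 2 * (4 * y * z) := by linarith
      _ ≤ δ ^ 2 * (y + z) ^ 2 := by gcongr; exact four_mul_le_sq_add y z
      _ = (δ * (y + z)) ^ 2 := by ring
  have hsum : 1 + δ + δ ^ 2 ≤ δ * (y + z) := le_of_sq_le_sq am_gm (by positivity)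
  linarith

theorem IsSplitSubsolution.le_pow_sub {a : ℕ → R} (ha : IsSplitSubsolution a) {x δ : R}
    (hx : 1 ≤ x) (hδ : 0 ≤ δ) {N : ℕ} (hN : 1 ≤ N)
    (hinit : ∀ k, 1 ≤ k → k ≤ N → a k ≤ x ^ k - δ)
    (hlarge : (1 + δ + δ ^ 2) ^ 2 ≤ 4 * δ ^ 2 * x ^ (N + 1)) {k : ℕ} (hk : 1 ≤ k) :
    a k ≤ x ^ k - δ := by
  refine ha.le_of_mul_add_one_le (u := fun k ↦ x ^ k - δ) hN hinit ?_ k hk le_rfl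
  intro i j _ _ hij _
  have hpow : (1 + δ + δ ^ 2) ^ 2 ≤ 4 * δ ^ 2 * (x ^ i * x ^ j) := by
    rw [← pow_add]
    exact hlarge.trans (mul_le_mul_of_nonneg_left (pow_le_pow_right₀ hx hij) (by positivity))
  simpa only [pow_add] using sub_mul_sub_add_one_le_mul_sub (by positivity) (by positivity) hδ hpow

end LinearOrderedCommRing

section LinearOrderedField

variable {K : Type*} [Field K] [LinearOrder K] [IsStrictOrderedRing K]

theorem initialPathCount_le_pow_sub {k : ℕ} (hk : 1 ≤ k) (hk16 : k ≤ 16) :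
    (initialPathCount k : K) ≤ 1.50284 ^ k - 0.019 := by
  interval_cases k <;> norm_num [initialPathCount]

theorem P_upper_bound_general (P : ℕ → K) (hP0 : ∀ n, 2 ≤ n → 0 ≤ P n) (hP2 : P 2 ≤ 1)
    (hP : ∀ n, 3 ≤ n → ∃ m ∈ Finset.Icc 2 (n - 1), P n ≤ P m * P (n + 1 - m) + 1) :
    ∀ n, 2 ≤ n → P n ≤ 1.50284 ^ (n - 1) := by
  have hsub : IsSplitSubsolution fun k ↦ P (k + 1) := isSplitSubsolution_shift hP0 hP2 hP
  have hinit : ∀ k, 1 ≤ k → k ≤ 16 → P (k + 1) ≤ 1.50284 ^ k - 0.019 := fun k hk hk16 ↦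
    (hsub.le_initialPathCount hk hk16).trans (initialPathCount_le_pow_sub hk hk16)
  intro n hn
  obtain ⟨k, rfl⟩ : ∃ k, n = k + 1 := ⟨n - 1, by omega⟩
  calc P (k + 1) ≤ 1.50284 ^ k - 0.019 :=
        hsub.le_pow_sub (by norm_num) (by norm_num) (by norm_num) hinit (by norm_num) (by omega)
    _ ≤ 1.50284 ^ k := sub_le_self _ (by norm_num)

end LinearOrderedField

theorem P_upper_bound
    (P : ℕ → ℕ) (hP2 : P 2 = 1)
    (hP : ∀ n, 3 ≤ n →
      P n = Finset.sup (Finset.Icc 2 (n - 1)) (fun m => P m * P (n + 1 - m) + 1)) :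
    ∀ n, 2 ≤ n → (P n : ℝ) ≤ 1.50284 ^ (n - 1) := by
  refine P_upper_bound_general (fun n ↦ (P n : ℝ)) (fun n _ ↦ (P n).cast_nonneg) (by simp [hP2]) ?_
  intro n hn
  have hne : (Finset.Icc 2 (n - 1)).Nonempty := Finset.nonempty_Icc.2 (by omega)
  obtain ⟨m, hm, hmax⟩ := Finset.exists_mem_eq_sup _ hne fun m ↦ P m * P (n + 1 - m) + 1
  exact ⟨m, hm, by exact_mod_cast ((hP n hn).trans hmax).le⟩
end

section
/- Let P : ℕ → ℕ satisfy P(2) = 1 and, for n ≥ 3, P(n) = max{ P(n₁)·P(n₂) + 1 : n₁ + n₂ = n + 1, n₁, n₂ ≥ 2 }, and let C_x : ℕ → ℕ satisfy C_x(2) = 0 and, for n ≥ 3, C_x(n) = max{ P(n₁)·P(n₂) + C_x(n₁) + C_x(n₂) : n₁ + n₂ = n + 1, n₁, n₂ ≥ 2 }. Then for every n ≥ 3, C_x(n) ≤ n · P(n). -/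
/-!
A triangulation of `n` points in convex position has `n - 2` triangles, which suggests the sharper
bound `C n ≤ (n - 2) * P n`, and this one passes through the recurrence term by term. If
`m + k = n + 1`, then `(m - 2) + (k - 2) + 1 = n - 2`. As `P ≥ 1`, the bounds `(m - 2) * P m` and
`(k - 2) * P k` are at most `m - 2` and `k - 2` copies of `P m * P k`, so together with the term
`P m * P k` of the recurrence they give at most `n - 2` copies of `P m * P k ≤ P n`.
-/

section Split

variable {α : Type*} (f : ℕ → ℕ → α) {a : α} {m k n : ℕ}

theorem le_of_sup_Icc_le_of_add_eq_add_one [SemilatticeSup α] [OrderBot α]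
    (ha : ((Finset.Icc 2 (n - 1)).sup fun i => f i (n + 1 - i)) ≤ a)
    (hm : 2 ≤ m) (hk : 2 ≤ k) (hmk : m + k = n + 1) : f m k ≤ a := by
  obtain rfl : k = n + 1 - m := by omega
  exact Finset.sup_le_iff.mp ha m (Finset.mem_Icc.mpr ⟨hm, by omega⟩)

theorem exists_add_eq_add_one_of_le_sup_Icc [LinearOrder α] [OrderBot α] (hn : 3 ≤ n)
    (ha : a ≤ (Finset.Icc 2 (n - 1)).sup fun i => f i (n + 1 - i)) :
    ∃ m k, 2 ≤ m ∧ 2 ≤ k ∧ m + k = n + 1 ∧ a ≤ f m k := by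
  have hne : (Finset.Icc 2 (n - 1)).Nonempty := Finset.nonempty_Icc.mpr (by omega)
  obtain ⟨m, hm, hsup⟩ := Finset.exists_mem_eq_sup _ hne fun i => f i (n + 1 - i)
  obtain ⟨hm₂, hmn⟩ := Finset.mem_Icc.mp hm
  exact ⟨m, n + 1 - m, hm₂, by omega, by omega, ha.trans_eq hsup⟩

end Split

section Recurrence

variable {R : Type*} [Semiring R] [PartialOrder R] [IsOrderedRing R] {P C : ℕ → R}

theorem one_le_of_mul_le_succ (hP2 : 1 ≤ P 2)
    (hP : ∀ n, 2 ≤ n → P 2 * P n ≤ P (n + 1)) {n : ℕ} (hn : 2 ≤ n) : 1 ≤ P n := by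
  induction n, hn using Nat.le_induction with
  | base => exact hP2
  | succ n hn ih => exact (one_le_mul_of_one_le_of_one_le hP2 ih).trans (hP n hn)

theorem Cx_le_n_mul_P_general (hP2 : 1 ≤ P 2)
    (hP : ∀ m k n, 2 ≤ m → 2 ≤ k → m + k = n + 1 → P m * P k ≤ P n) (hC2 : C 2 ≤ 0)
    (hC : ∀ n, 3 ≤ n →
      ∃ m k, 2 ≤ m ∧ 2 ≤ k ∧ m + k = n + 1 ∧ C n ≤ P m * P k + C m + C k)
    {n : ℕ} (hn : 2 ≤ n) : C n ≤ (n - 2 : ℕ) * P n := by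
  have one_le_P {n : ℕ} : 2 ≤ n → 1 ≤ P n :=
    one_le_of_mul_le_succ hP2 fun n hn => hP 2 n (n + 1) le_rfl hn (by omega)
  induction n using Nat.strong_induction_on with
  | _ n ih =>
    obtain rfl | hn₃ := hn.eq_or_lt
    · simpa using hC2
    obtain ⟨m, k, hm, hk, hmk, hCn⟩ := hC n hn₃
    have hm_le : P m ≤ P m * P k :=
      le_mul_of_one_le_right (zero_le_one.trans (one_le_P hm)) (one_le_P hk)
    have hk_le : P k ≤ P m * P k :=
      le_mul_of_one_le_left (zero_le_one.trans (one_le_P hk)) (one_le_P hm)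
    have hcount : n - 2 = 1 + (m - 2) + (k - 2) := by omega
    calc C n ≤ P m * P k + C m + C k := hCn
      _ ≤ P m * P k + (m - 2 : ℕ) * P m + (k - 2 : ℕ) * P k := by
        gcongr
        · exact ih m (by omega) hm
        · exact ih k (by omega) hk
      _ ≤ P m * P k + (m - 2 : ℕ) * (P m * P k) + (k - 2 : ℕ) * (P m * P k) := by gcongr
      _ = (n - 2 : ℕ) * (P m * P k) := by
        rw [hcount, Nat.cast_add, Nat.cast_add, Nat.cast_one, add_mul, add_mul, one_mul]
      _ ≤ (n - 2 : ℕ) * P n := by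
        gcongr
        exact hP m k n hm hk hmk

end Recurrence

theorem Cx_le_n_mul_P
    (P : ℕ → ℕ) (hP2 : P 2 = 1)
    (hP : ∀ n, 3 ≤ n →
      P n = Finset.sup (Finset.Icc 2 (n - 1)) (fun m => P m * P (n + 1 - m) + 1))
    (C : ℕ → ℕ) (hC2 : C 2 = 0)
    (hC : ∀ n, 3 ≤ n →
      C n = Finset.sup (Finset.Icc 2 (n - 1))
        (fun m => P m * P (n + 1 - m) + C m + C (n + 1 - m))) :
    ∀ n, 3 ≤ n → C n ≤ n * P n := by
  intro n hn
  have hPsplit (m k n : ℕ) (hm : 2 ≤ m) (hk : 2 ≤ k) (hmk : m + k = n + 1) : P m * P k ≤ P n :=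
    (Nat.le_succ _).trans <|
      le_of_sup_Icc_le_of_add_eq_add_one (fun i j => P i * P j + 1) (hP n (by omega)).ge hm hk hmk
  have hCsplit (n : ℕ) (hn : 3 ≤ n) :
      ∃ m k, 2 ≤ m ∧ 2 ≤ k ∧ m + k = n + 1 ∧ C n ≤ P m * P k + C m + C k :=
    exists_add_eq_add_one_of_le_sup_Icc (fun i j => P i * P j + C i + C j) hn (hC n hn).le
  calc C n ≤ (n - 2) * P n := Cx_le_n_mul_P_general hP2.ge hPsplit hC2.le hCsplit (by omega)
    _ ≤ n * P n := Nat.mul_le_mul_right _ (Nat.sub_le n 2)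
end

section
/- Let P : ℕ → ℕ satisfy P(2) = 1 and, for n ≥ 3, P(n) = max{ P(n₁)·P(n₂) + 1 : n₁ + n₂ = n + 1, n₁, n₂ ≥ 2 }, and let C_x : ℕ → ℕ satisfy C_x(2) = 0 and, for n ≥ 3, C_x(n) = max{ P(n₁)·P(n₂) + C_x(n₁) + C_x(n₂) : n₁ + n₂ = n + 1, n₁, n₂ ≥ 2 }. Then for every n ≥ 3, C_x(n) ≤ n · 1.50284^n, where the inequality is between real numbers. -/
/-!
Since `i + j = n + 1` means `(i - 1) + (j - 1) = n - 1`, the bound `P n ≤ c ^ (n - 1)` passes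
through the recurrence of `P` except for the summand `1`. That summand is absorbed by strengthening
the bound to `P n ≤ x - K / x` with `x = c ^ (n - 1)`: in `(x - K / x) * (y - K / y)` the cross
terms `K * (x / y + y / x)` are at least `2 * K`, so any `K > 1 / 2` leaves room for the `1` once
`x * y` is large. For `c = 1.50284` and `K = 0.51` this is the case from `n = 10` on. Finally, `C n`
is a sum over the `n - 2` triangles of products `P i * P j`, each at most `c ^ (n - 1)`.
-/

/-- The recurrence `F n = max {f i j | i + j = n + 1, 2 ≤ i, 2 ≤ j}` for `n ≥ 3`, shared by the
path and polygon counts: the triangle on a boundary edge splits a triangulated `n`-gon into an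
`i`-gon and a `j`-gon. The maximum is encoded as a supremum over `i = m`, `j = n + 1 - m`. -/
def IsMaxOverSplits {α : Type*} [LinearOrder α] [OrderBot α] (F : ℕ → α) (f : ℕ → ℕ → α) : Prop :=
  ∀ n, 3 ≤ n → F n = (Finset.Icc 2 (n - 1)).sup fun m => f m (n + 1 - m)

theorem IsMaxOverSplits.exists_split {α : Type*} [LinearOrder α] [OrderBot α] {F : ℕ → α}
    {f : ℕ → ℕ → α} (hF : IsMaxOverSplits F f) {n : ℕ} (hn : 3 ≤ n) :
    ∃ i j, 2 ≤ i ∧ 2 ≤ j ∧ i + j = n + 1 ∧ F n = f i j := by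
  obtain ⟨m, hm, hsup⟩ := Finset.exists_mem_eq_sup (Finset.Icc 2 (n - 1))
    (Finset.nonempty_Icc.2 (by omega)) fun m => f m (n + 1 - m)
  rw [Finset.mem_Icc] at hm
  exact ⟨m, n + 1 - m, hm.1, by omega, by omega, (hF n hn).trans hsup⟩

theorem pow_sub_one_mul_pow_sub_one {M : Type*} [Monoid M] (c : M) {i j n : ℕ} (hi : 1 ≤ i)
    (hj : 1 ≤ j) (hij : i + j = n + 1) : c ^ (i - 1) * c ^ (j - 1) = c ^ (n - 1) := by
  rw [← pow_add]
  congr 1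
  omega

section Paths

variable {𝕜 : Type*} [Field 𝕜] [LinearOrder 𝕜] [IsStrictOrderedRing 𝕜]

theorem two_le_div_add_div {x y : 𝕜} (hx : 0 < x) (hy : 0 < y) : 2 ≤ x / y + y / x := by
  rw [div_add_div _ _ hy.ne' hx.ne', le_div_iff₀ (mul_pos hy hx)]
  linarith [two_mul_le_add_sq x y]

theorem mul_add_one_add_div_le {K p q x y : 𝕜} (hK : 0 ≤ K) (hp : 0 ≤ p) (hq : 0 ≤ q) (hx : 0 < x)
    (hy : 0 < y) (hpx : p + K / x ≤ x) (hqy : q + K / y ≤ y)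
    (hxy : K ^ 2 + K ≤ (2 * K - 1) * (x * y)) :
    p * q + 1 + K / (x * y) ≤ x * y := by
  have hpq : p * q ≤ (x - K / x) * (y - K / y) :=
    mul_le_mul (by linarith) (by linarith) hq (by linarith)
  have hexpand : (x - K / x) * (y - K / y) =
      x * y - K * (x / y + y / x) + K ^ 2 / (x * y) := by
    field_simp
    ring
  have hcross : 2 * K ≤ K * (x / y + y / x) := by
    linarith [mul_le_mul_of_nonneg_left (two_le_div_add_div hx hy) hK]
  have hslack : K ^ 2 / (x * y) + K / (x * y) ≤ 2 * K - 1 := by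
    rwa [← add_div, div_le_iff₀ (mul_pos hx hy)]
  linarith

variable {P : ℕ → ℕ}

theorem path_add_div_pow_le (hP : IsMaxOverSplits P fun i j => P i * P j + 1) {c K : 𝕜} {N : ℕ}
    (hc : 1 ≤ c) (hK : 0 ≤ K) (hN : 2 ≤ N) (hcN : K ^ 2 + K ≤ (2 * K - 1) * c ^ N)
    (hbase : ∀ n, 2 ≤ n → n ≤ N → P n + K / c ^ (n - 1) ≤ c ^ (n - 1)) (n : ℕ) (hn : 2 ≤ n) :
    P n + K / c ^ (n - 1) ≤ c ^ (n - 1) := by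
  have hcpos : 0 < c := by linarith
  have hK' : 0 ≤ 2 * K - 1 :=
    nonneg_of_mul_nonneg_left (le_trans (by positivity) hcN) (pow_pos hcpos N)
  induction n using Nat.strong_induction_on with
  | _ n ih =>
    rcases le_or_gt n N with hnN | hNn
    · exact hbase n hn hnN
    obtain ⟨i, j, hi, hj, hij, hPn⟩ := hP.exists_split (show 3 ≤ n by omega)
    have hpow : c ^ (i - 1) * c ^ (j - 1) = c ^ (n - 1) :=
      pow_sub_one_mul_pow_sub_one c (by omega) (by omega) hij
    have hlarge : K ^ 2 + K ≤ (2 * K - 1) * c ^ (n - 1) :=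
      hcN.trans (mul_le_mul_of_nonneg_left (pow_le_pow_right₀ hc (by omega)) hK')
    rw [hPn, ← hpow]
    push_cast
    exact mul_add_one_add_div_le hK (by positivity) (by positivity) (by positivity)
      (by positivity) (ih i (by omega) hi) (ih j (by omega) hj) (by rwa [hpow])

theorem path_small_values (hP2 : P 2 = 1) (hP : IsMaxOverSplits P fun i j => P i * P j + 1) :
    P 3 = 2 ∧ P 4 = 3 ∧ P 5 = 5 ∧ P 6 = 7 ∧ P 7 = 11 ∧ P 8 = 16 ∧ P 9 = 26 := by
  have hP3 : P 3 = 2 := by simp [hP 3, hP2]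
  have hP4 : P 4 = 3 := by simp [hP 4, Finset.Icc_ofNat_ofNat, hP2, hP3]
  have hP5 : P 5 = 5 := by simp [hP 5, Finset.Icc_ofNat_ofNat, hP2, hP3, hP4]
  have hP6 : P 6 = 7 := by simp [hP 6, Finset.Icc_ofNat_ofNat, hP2, hP3, hP4, hP5]
  have hP7 : P 7 = 11 := by simp [hP 7, Finset.Icc_ofNat_ofNat, hP2, hP3, hP4, hP5, hP6]
  have hP8 : P 8 = 16 := by simp [hP 8, Finset.Icc_ofNat_ofNat, hP2, hP3, hP4, hP5, hP6, hP7]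
  have hP9 : P 9 = 26 := by simp [hP 9, Finset.Icc_ofNat_ofNat, hP2, hP3, hP4, hP5, hP6, hP7, hP8]
  exact ⟨hP3, hP4, hP5, hP6, hP7, hP8, hP9⟩

-- The value `P 9 = 26` forces `K < 0.5121`, and the induction step at `n = 10` needs `K > 0.5098`.
theorem path_le_pow (hP2 : P 2 = 1) (hP : IsMaxOverSplits P fun i j => P i * P j + 1) (n : ℕ)
    (hn : 2 ≤ n) : (P n : ℝ) ≤ 1.50284 ^ (n - 1) := by
  have hbase (n : ℕ) (hn2 : 2 ≤ n) (hn9 : n ≤ 9) :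
      P n + 0.51 / 1.50284 ^ (n - 1) ≤ (1.50284 : ℝ) ^ (n - 1) := by
    obtain ⟨hP3, hP4, hP5, hP6, hP7, hP8, hP9⟩ := path_small_values hP2 hP
    interval_cases n <;> norm_num [hP2, hP3, hP4, hP5, hP6, hP7, hP8, hP9]
  have hstrong := path_add_div_pow_le hP (by norm_num) (by norm_num) (by norm_num) (by norm_num)
    hbase n hn
  have hnonneg : (0 : ℝ) ≤ 0.51 / 1.50284 ^ (n - 1) := by positivity
  linarith

end Paths

theorem polygon_le_mul_pow {R : Type*} [CommRing R] [LinearOrder R] [IsStrictOrderedRing R]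
    {P C : ℕ → ℕ} (hC2 : C 2 = 0) (hC : IsMaxOverSplits C fun i j => P i * P j + C i + C j) {c : R}
    (hc : 1 ≤ c) (hPc : ∀ n, 2 ≤ n → (P n : R) ≤ c ^ (n - 1)) (n : ℕ) (hn : 2 ≤ n) :
    (C n : R) ≤ (n - 2) * c ^ (n - 1) := by
  induction n using Nat.strong_induction_on with
  | _ n ih =>
    rcases hn.eq_or_lt with rfl | hn3
    · simp [hC2]
    obtain ⟨i, j, hi, hj, hij, hCn⟩ := hC.exists_split hn3
    have hpaths : (P i * P j : R) ≤ c ^ (n - 1) := by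
      rw [← pow_sub_one_mul_pow_sub_one c (by omega) (by omega) hij]
      exact mul_le_mul (hPc i hi) (hPc j hj) (by positivity) (by positivity)
    have hpart (k : ℕ) (hk : 2 ≤ k) (hkn : k < n) : (C k : R) ≤ (k - 2) * c ^ (n - 1) := by
      have hk' : (2 : R) ≤ k := by exact_mod_cast hk
      exact (ih k hkn hk).trans
        (mul_le_mul_of_nonneg_left (pow_le_pow_right₀ hc (by omega)) (by linarith))
    have hsum : (i + j : R) = n + 1 := by exact_mod_cast hij
    calc (C n : R) = P i * P j + C i + C j := by rw [hCn]; push_cast; rfl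
      _ ≤ c ^ (n - 1) + (i - 2) * c ^ (n - 1) + (j - 2) * c ^ (n - 1) :=
        add_le_add_three hpaths (hpart i hi (by omega)) (hpart j hj (by omega))
      _ = (i + j - 3) * c ^ (n - 1) := by ring
      _ = (n - 2) * c ^ (n - 1) := by rw [hsum]; ring

theorem Cx_upper_bound
    (P : ℕ → ℕ) (hP2 : P 2 = 1)
    (hP : ∀ n, 3 ≤ n →
      P n = Finset.sup (Finset.Icc 2 (n - 1)) (fun m => P m * P (n + 1 - m) + 1))
    (C : ℕ → ℕ) (hC2 : C 2 = 0)
    (hC : ∀ n, 3 ≤ n →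
      C n = Finset.sup (Finset.Icc 2 (n - 1))
        (fun m => P m * P (n + 1 - m) + C m + C (n + 1 - m))) :
    ∀ n, 3 ≤ n → (C n : ℝ) ≤ (n : ℝ) * 1.50284 ^ n := by
  intro n hn
  calc (C n : ℝ) ≤ (n - 2) * 1.50284 ^ (n - 1) :=
        polygon_le_mul_pow hC2 hC (by norm_num) (path_le_pow hP2 hP) n (by omega)
    _ ≤ n * 1.50284 ^ n := by
        gcongr
        · linarith
        · norm_num
        · omega
end

section
/- Let α : ℕ → ℕ be defined by α_i = 2^i + i + 1. Then 677^(1/16) · exp( ∑_{i=4}^{∞} 2^(-α_i) ) ≤ 1.50284, where the sum is a convergent series of real numbers. -/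
/-!
The exponents `α 4 = 21 < α 5 < ⋯` are strictly increasing, so the series is at most the geometric
series `2⁻²¹ + 2⁻²² + ⋯ = 2⁻²⁰`. Since `exp x ≤ 1 / (1 - x)` on `[0, 1)` and `677 ≤ 1.502837 ^ 16`,
the product is at most `1.502837 / (1 - 2⁻²⁰)`, which is just below `1.50284`.
-/

theorem strictMono_two_pow_add_self_add_one : StrictMono fun i : ℕ => 2 ^ i + i + 1 :=
  ((pow_right_strictMono₀ one_lt_two).add strictMono_id).add_const 1

theorem tsum_pow_comp_le_of_strictMono {r : ℝ} (hr₀ : 0 ≤ r) (hr₁ : r < 1) {a : ℕ → ℕ}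
    (ha : StrictMono a) : ∑' i, r ^ a i ≤ r ^ a 0 * (1 - r)⁻¹ := by
  have geometric : Summable fun i => r ^ i := summable_geometric_of_lt_one hr₀ hr₁
  have term_le (i : ℕ) : r ^ a i ≤ r ^ a 0 * r ^ i := by
    rw [← pow_add]
    exact pow_le_pow_of_le_one hr₀ hr₁.le (by simpa [add_comm] using ha.add_le_nat i 0)
  calc ∑' i, r ^ a i
      ≤ ∑' i, r ^ a 0 * r ^ i :=
        (geometric.comp_injective ha.injective).tsum_le_tsum term_le (geometric.mul_left _)
    _ = r ^ a 0 * (1 - r)⁻¹ := by rw [tsum_mul_left, tsum_geometric_of_lt_one hr₀ hr₁]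

theorem tsum_zpow_neg_comp_le_of_strictMono {b : ℝ} (hb : 1 < b) {a : ℕ → ℕ}
    (ha : StrictMono a) : ∑' i, b ^ (-(a i : ℤ)) ≤ b ^ (-(a 0 : ℤ)) * (1 - b⁻¹)⁻¹ := by
  simpa only [zpow_neg, zpow_natCast, inv_pow] using
    tsum_pow_comp_le_of_strictMono (inv_nonneg.2 (zero_le_one.trans hb.le))
      (inv_lt_one_of_one_lt₀ hb) ha

theorem rpow_one_div_natCast_le_of_le_pow {x y : ℝ} {n : ℕ} (hn : n ≠ 0) (hx : 0 ≤ x)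
    (hy : 0 ≤ y) (h : x ≤ y ^ n) : x ^ (1 / n : ℝ) ≤ y := by
  rwa [one_div, Real.rpow_inv_le_iff_of_pos hx hy (by positivity), Real.rpow_natCast]

theorem fact_2
    (α : ℕ → ℕ) (hα : ∀ i, α i = 2 ^ i + i + 1) :
    (677 : ℝ) ^ ((1 : ℝ) / 16) *
      Real.exp (∑' i : ℕ, (2 : ℝ) ^ (-(α (i + 4) : ℤ))) ≤ 1.50284 := by
  have root_le : (677 : ℝ) ^ ((1 : ℝ) / 16) ≤ 1.502837 :=
    mod_cast rpow_one_div_natCast_le_of_le_pow (x := 677) (y := 1.502837) (n := 16)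
      (by norm_num) (by norm_num) (by norm_num) (by norm_num)
  have α_strictMono : StrictMono α := funext hα ▸ strictMono_two_pow_add_self_add_one
  have tail_le : ∑' i : ℕ, (2 : ℝ) ^ (-(α (i + 4) : ℤ)) ≤ 1 / 2 ^ 20 := by
    calc ∑' i : ℕ, (2 : ℝ) ^ (-(α (i + 4) : ℤ))
        ≤ 2 ^ (-(α (0 + 4) : ℤ)) * (1 - 2⁻¹)⁻¹ :=
          tsum_zpow_neg_comp_le_of_strictMono one_lt_two
            (α_strictMono.comp (add_left_strictMono (a := 4)))
      _ = 1 / 2 ^ 20 := by norm_num [hα]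
  calc (677 : ℝ) ^ ((1 : ℝ) / 16) * Real.exp (∑' i : ℕ, (2 : ℝ) ^ (-(α (i + 4) : ℤ)))
      ≤ 1.502837 * Real.exp (1 / 2 ^ 20) := by gcongr
    _ ≤ 1.502837 * (1 / (1 - 1 / 2 ^ 20)) := by
        gcongr
        exact Real.exp_bound_div_one_sub_of_interval (by norm_num) (by norm_num)
    _ ≤ 1.50284 := by norm_num
end

section
/- Let P : ℕ → ℕ satisfy P(2) = 1 and, for n ≥ 3, P(n) = max{ P(n₁)·P(n₂) + 1 : n₁ + n₂ = n + 1, n₁, n₂ ≥ 2 }. Then P(9) = 26 and for every n with 2 ≤ n ≤ 16, P(n)^(1/(n-1)) ≤ 26^(1/8), where the exponentiation and inequality are in the real numbers; that is, the maximum of P(n)^(1/(n-1)) over 2 ≤ n ≤ 16 equals 26^(1/8). -/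
/-!
The recurrence computes `P n` from the values of `P` on `[2, n)`, so together with `P 2 = 1` it
determines `P` on `[2, ∞)`, and the values up to `16` are found by direct computation. Clearing the
roots turns the inequality into `P n ^ 8 ≤ 26 ^ (n - 1)`, a comparison of integers with equality at
`n = 9`. The bound fails at `n = 17`, since `P 17 ≥ P 9 * P 9 + 1 > 26 ^ 2`.
-/

/-- The right-hand side of the recurrence. The triangle on a given edge of a triangulated `n`-gon
cuts off an `m`-gon and an `(n + 1 - m)`-gon; a convex path between the ends of that edge is the
edge itself or joins a path in one part to a path in the other. The value is `0` for `n ≤ 2`. -/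
def maxSplit (f : ℕ → ℕ) (n : ℕ) : ℕ :=
  (Finset.Icc 2 (n - 1)).sup fun m => f m * f (n + 1 - m) + 1

/-- The solution of the recurrence `f n = maxSplit f n`, `f 2 = 1`, tabulated for `2 ≤ n ≤ 16`.
The entries at `0` and `1` and the values beyond `16` are placeholders. -/
def maxConvexPaths (n : ℕ) : ℕ :=
  [0, 0, 1, 2, 3, 5, 7, 11, 16, 26, 36, 56, 81, 131, 183, 287, 417].getD n 0

theorem maxSplit_congr {f g : ℕ → ℕ} {n : ℕ} (h : Set.EqOn f g (Set.Ico 2 n)) :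
    maxSplit f n = maxSplit g n := by
  refine Finset.sup_congr rfl fun m hm => ?_
  rw [Finset.mem_Icc] at hm
  rw [h (show m ∈ Set.Ico 2 n by grind), h (show n + 1 - m ∈ Set.Ico 2 n by grind)]

theorem eqOn_of_eq_maxSplit {f g : ℕ → ℕ} {N : ℕ} (h2 : f 2 = g 2)
    (hf : ∀ n ∈ Finset.Icc 3 N, f n = maxSplit f n)
    (hg : ∀ n ∈ Finset.Icc 3 N, g n = maxSplit g n) :
    Set.EqOn f g (Set.Icc 2 N) := by
  intro n
  induction n using Nat.strong_induction_on with
  | _ n ih =>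
    rintro ⟨hn2, hnN⟩
    obtain rfl | hn3 := hn2.eq_or_lt
    · exact h2
    · have hn : n ∈ Finset.Icc 3 N := Finset.mem_Icc.2 ⟨hn3, hnN⟩
      have heq : Set.EqOn f g (Set.Ico 2 n) := fun k hk =>
        ih k hk.2 ⟨hk.1, hk.2.le.trans hnN⟩
      rw [hf n hn, hg n hn, maxSplit_congr heq]

theorem maxConvexPaths_eq_maxSplit :
    ∀ n ∈ Finset.Icc 3 16, maxConvexPaths n = maxSplit maxConvexPaths n := by
  decide

theorem maxConvexPaths_pow_eight_le :
    ∀ n ∈ Finset.Icc 2 16, maxConvexPaths n ^ 8 ≤ 26 ^ (n - 1) := by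
  decide

theorem rpow_one_div_le_rpow_one_div_iff {a b x y : ℝ} (ha : 0 ≤ a) (hb : 0 ≤ b)
    (hx : 0 < x) (hy : 0 < y) : a ^ (1 / x) ≤ b ^ (1 / y) ↔ a ^ y ≤ b ^ x := by
  rw [one_div, one_div, Real.rpow_inv_le_iff_of_pos ha (by positivity) hx,
    ← Real.rpow_mul hb, mul_comm, Real.rpow_mul hb,
    Real.le_rpow_inv_iff_of_pos ha (by positivity) hy]

theorem fact_basis1
    (P : ℕ → ℕ) (hP2 : P 2 = 1)
    (hP : ∀ n, 3 ≤ n →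
      P n = Finset.sup (Finset.Icc 2 (n - 1)) (fun m => P m * P (n + 1 - m) + 1)) :
    P 9 = 26 ∧ ∀ n, 2 ≤ n → n ≤ 16 →
      (P n : ℝ) ^ ((1 : ℝ) / ((n : ℝ) - 1)) ≤ (26 : ℝ) ^ ((1 : ℝ) / 8) := by
  have hPtable : Set.EqOn P maxConvexPaths (Set.Icc 2 16) :=
    eqOn_of_eq_maxSplit hP2 (fun n hn => hP n (Finset.mem_Icc.1 hn).1) maxConvexPaths_eq_maxSplit
  refine ⟨hPtable (by norm_num), fun n hn2 hn16 => ?_⟩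
  have hpow : P n ^ 8 ≤ 26 ^ (n - 1) := by
    rw [hPtable ⟨hn2, hn16⟩]
    exact maxConvexPaths_pow_eight_le n (Finset.mem_Icc.2 ⟨hn2, hn16⟩)
  have hcast : (n : ℝ) - 1 = (n - 1 : ℕ) := (Nat.cast_pred (by lia)).symm
  have hpos : (0 : ℝ) < (n - 1 : ℕ) := Nat.cast_pos.2 (by lia)
  rw [hcast, rpow_one_div_le_rpow_one_div_iff (by positivity) (by norm_num) hpos (by norm_num)]
  exact_mod_cast hpow
end

section
/- Let P : ℕ → ℕ satisfy P(2) = 1 and, for n ≥ 3, P(n) = max{ P(n₁)·P(n₂) + 1 : n₁ + n₂ = n + 1, n₁, n₂ ≥ 2 }. Then for every n with 2 ≤ n ≤ 16, P(n) · exp( P(n)^(-1) · 677^(-(33-n)/16) ) ≤ 677^((n-1)/16), where the exponentiations and inequality are in the real numbers. -/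
/-!
For `n ≤ 16` the exponent `-(33 - n) / 16` is at most `-1`, so the exponential raises `P n` by at
most `1 / 676`: from `exp t ≤ 1 / (1 - t)` one gets `p * exp (c / p) ≤ p + c / (1 - c)` for `p ≥ 1`,
and `c = 1 / 677` gives `c / (1 - c) = 1 / 676`. As `P 2, …, P 16` are determined by the recurrence,
what remains is `(P n + 1 / 676) ^ 16 ≤ 677 ^ (n - 1)`, an inequality between natural numbers once
denominators are cleared. The tightest case is `n = 9`, where `P 9 = 26` and `677 = 26 ^ 2 + 1`.
-/

/-- The right-hand side of the recurrence for the maximum number `P n` of convex paths: the maximum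
of `P n₁ * P n₂ + 1` over `n₁ + n₂ = n + 1` with `n₁, n₂ ≥ 2`, parametrized by `m = n₁`. -/
def splitMax (P : ℕ → ℕ) (n : ℕ) : ℕ :=
  (Finset.Icc 2 (n - 1)).sup fun m => P m * P (n + 1 - m) + 1

lemma splitMax_congr {P Q : ℕ → ℕ} {n : ℕ} (h : ∀ m, 2 ≤ m → m < n → P m = Q m) :
    splitMax P n = splitMax Q n := by
  refine Finset.sup_congr rfl fun m hm => ?_
  rw [Finset.mem_Icc] at hm
  rw [h m (by omega) (by omega), h (n + 1 - m) (by omega) (by omega)]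

lemma eq_of_eq_splitMax {P Q : ℕ → ℕ} {N : ℕ} (h2 : P 2 = Q 2)
    (hP : ∀ n ≤ N, 3 ≤ n → P n = splitMax P n) (hQ : ∀ n ≤ N, 3 ≤ n → Q n = splitMax Q n) :
    ∀ n ≤ N, 2 ≤ n → P n = Q n := by
  intro n
  induction n using Nat.strong_induction_on with
  | _ n ih =>
    intro hnN hn2
    obtain rfl | hn3 : n = 2 ∨ 3 ≤ n := by omega
    · exact h2
    · rw [hP n hnN hn3, hQ n hnN hn3]
      exact splitMax_congr fun m hm2 hmn => ih m hmn (by omega) hm2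

lemma maxConvexPaths_eq_splitMax :
    ∀ n ≤ 16, 3 ≤ n → maxConvexPaths n = splitMax maxConvexPaths n := by
  decide

lemma one_le_maxConvexPaths : ∀ n ≤ 16, 2 ≤ n → 1 ≤ maxConvexPaths n := by
  decide

lemma maxConvexPaths_add_inv_pow_le {n : ℕ} (hn16 : n ≤ 16) (hn2 : 2 ≤ n) :
    ((maxConvexPaths n : ℝ) + 676⁻¹) ^ 16 ≤ 677 ^ (n - 1) := by
  have cleared : ∀ k ≤ 16, 2 ≤ k →
      (676 * maxConvexPaths k + 1) ^ 16 ≤ 676 ^ 16 * 677 ^ (k - 1) := by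
    decide
  have cleared_real : (676 * (maxConvexPaths n : ℝ) + 1) ^ 16 ≤ 676 ^ 16 * 677 ^ (n - 1) := by
    exact_mod_cast cleared n hn16 hn2
  rwa [show (maxConvexPaths n : ℝ) + 676⁻¹ = (676 * maxConvexPaths n + 1) / 676 by ring,
    div_pow, div_le_iff₀' (by positivity)]

lemma mul_exp_inv_mul_le {p c : ℝ} (hp : 1 ≤ p) (hc0 : 0 ≤ c) (hc1 : c < 1) :
    p * Real.exp (p⁻¹ * c) ≤ p + c / (1 - c) := by
  have : 0 < p := by linarith
  have ht_le : p⁻¹ * c ≤ c := mul_le_of_le_one_left hc0 (inv_le_one_of_one_le₀ hp)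
  have ht1 : p⁻¹ * c < 1 := ht_le.trans_lt hc1
  calc p * Real.exp (p⁻¹ * c)
      ≤ p * (1 / (1 - p⁻¹ * c)) := by
        gcongr
        exact Real.exp_bound_div_one_sub_of_interval (by positivity) ht1
    _ = p + c / (1 - p⁻¹ * c) := by
        have : p - c ≠ 0 := by linarith
        field_simp
        ring
    _ ≤ p + c / (1 - c) := by gcongr

lemma le_rpow_div_of_pow_le {x b : ℝ} {m k : ℕ} (hb : 0 ≤ b) (hk : k ≠ 0)
    (h : x ^ k ≤ b ^ m) : x ≤ b ^ ((m : ℝ) / k) := by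
  refine le_of_pow_le_pow_left₀ hk (by positivity) (h.trans_eq ?_)
  rw [← Real.rpow_mul_natCast hb, div_mul_cancel₀ _ (by exact_mod_cast hk), Real.rpow_natCast]

theorem fact_case1
    (P : ℕ → ℕ) (hP2 : P 2 = 1)
    (hP : ∀ n, 3 ≤ n →
      P n = Finset.sup (Finset.Icc 2 (n - 1)) (fun m => P m * P (n + 1 - m) + 1)) :
    ∀ n, 2 ≤ n → n ≤ 16 →
      (P n : ℝ) * Real.exp ((P n : ℝ)⁻¹ * (677 : ℝ) ^ (-((33 - (n : ℝ)) / 16))) ≤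
        (677 : ℝ) ^ (((n : ℝ) - 1) / 16) := by
  intro n hn2 hn16
  have value : P n = maxConvexPaths n :=
    eq_of_eq_splitMax hP2 (fun k _ => hP k) maxConvexPaths_eq_splitMax n hn16 hn2
  have one_le : (1 : ℝ) ≤ P n := by
    exact_mod_cast value ▸ one_le_maxConvexPaths n hn16 hn2
  have rpow_le : (677 : ℝ) ^ (-((33 - (n : ℝ)) / 16)) ≤ 677⁻¹ := by
    have : (n : ℝ) ≤ 16 := by exact_mod_cast hn16
    rw [← Real.rpow_neg_one]
    exact Real.rpow_le_rpow_of_exponent_le (by norm_num) (by linarith)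
  calc (P n : ℝ) * Real.exp ((P n : ℝ)⁻¹ * (677 : ℝ) ^ (-((33 - (n : ℝ)) / 16)))
      ≤ P n * Real.exp ((P n : ℝ)⁻¹ * 677⁻¹) := by gcongr
    _ ≤ P n + 677⁻¹ / (1 - 677⁻¹) := mul_exp_inv_mul_le one_le (by norm_num) (by norm_num)
    _ = maxConvexPaths n + 676⁻¹ := by rw [value]; norm_num
    _ ≤ 677 ^ (((n - 1 : ℕ) : ℝ) / (16 : ℕ)) :=
      le_rpow_div_of_pow_le (by norm_num) (by norm_num) (maxConvexPaths_add_inv_pow_le hn16 hn2)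
    _ = 677 ^ (((n : ℝ) - 1) / 16) := by push_cast [Nat.cast_sub (by omega : 1 ≤ n)]; rfl
end
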